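/- arXiv:2602.16879 — 5 statements merged into one kernel-verified Lean document; each statement's English description precedes it below -/
import Mathlib

section
/- Local meet-semilattices are exactly disjoint unions of meet-semilattices. Precisely: (i) if (Xᵢ)ᵢ∈I is a family of pairwise disjoint meet-semilattices and X = ⋃ᵢ Xᵢ is equipped with the partial operation where xy is defined iff x,y lie in the same Xᵢ, in which case xy = x ∧ᵢ y, then X is a local meet-semilattice; (ii) conversely, if S is a local meet-semilattice, then the relation ω on S defined by s ω t iff st is defined is an equivalence relation, each ω-equivalence class is closed under the operation of S, and each ω-class with the restricted (now totally defined) operation is a meet-semilattice, so S is the disjoint union of the meet-semilattices given by its ω-classes. -/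
/-!
For (i), the total function `sigmaMul` multiplies inside a fibre and returns its left argument on
pairs from different fibres; since a product stays in the fibre of its factors, all the
definedness clauses reduce to equalities of indices.

For (ii), the only point that needs an argument is transitivity of `ω`, `defined_trans`: if `fg`
and `gh` are defined then so is `(fg)h = (gf)h`, and associativity applied to `(gf)h` gives that
`fh` is defined. Closure of the classes and the order and greatest-lower-bound properties then
follow from associativity, commutativity and idempotency.
-/

universe u

/-- A semigroupoid (Exel): a partially defined binary operation, associative in Exel's sense.
`defined s t` means the product `s ⋆ t` is defined; `mul` is a total function whose value is
only meaningful on defined pairs. -/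
structure Semigroupoid (S : Type u) where
  defined : S → S → Prop
  mul : S → S → S
  assoc₁ : ∀ s t r, defined s t → defined t r →
    defined (mul s t) r ∧ defined s (mul t r) ∧ mul (mul s t) r = mul s (mul t r)
  assoc₂ : ∀ s t r, defined s t → defined (mul s t) r →
    defined t r ∧ defined s (mul t r) ∧ mul (mul s t) r = mul s (mul t r)
  assoc₃ : ∀ s t r, defined t r → defined s (mul t r) →
    defined s t ∧ defined (mul s t) r ∧ mul (mul s t) r = mul s (mul t r)

/-- A left Ehresmann semigroupoid. -/
structure LeftEhresmannSgpd (S : Type u) extends Semigroupoid S where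
  plus : S → S
  le1 : ∀ s, defined (plus s) s ∧ mul (plus s) s = s
  le2 : ∀ s t, defined (plus s) (plus t) →
    defined (plus t) (plus s) ∧ mul (plus s) (plus t) = mul (plus t) (plus s)
  le3 : ∀ s t, defined (plus s) (plus t) → mul (plus s) (plus t) = plus (mul (plus s) t)
  le4 : ∀ s t, defined s t → plus (mul s t) = plus (mul s (plus t))

/-- The set of projections `S⁺ = {s⁺ : s ∈ S}`. -/
def LeftEhresmannSgpd.projections {S : Type u} (E : LeftEhresmannSgpd S) : Set S :=
  {e | ∃ s, e = E.plus s}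

/-- The relation `s ≤_l t` : `s⁺t` is defined and `s⁺t = s`. -/
def LeftEhresmannSgpd.lel {S : Type u} (E : LeftEhresmannSgpd S) (s t : S) : Prop :=
  E.defined (E.plus s) t ∧ E.mul (E.plus s) t = s

/-- A two-sided Ehresmann semigroupoid. -/
structure EhresmannSgpd (S : Type u) extends Semigroupoid S where
  plus : S → S
  star : S → S
  le1 : ∀ s, defined (plus s) s ∧ mul (plus s) s = s
  le2 : ∀ s t, defined (plus s) (plus t) →
    defined (plus t) (plus s) ∧ mul (plus s) (plus t) = mul (plus t) (plus s)
  le3 : ∀ s t, defined (plus s) (plus t) → mul (plus s) (plus t) = plus (mul (plus s) t)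
  le4 : ∀ s t, defined s t → plus (mul s t) = plus (mul s (plus t))
  re1 : ∀ s, defined s (star s) ∧ mul s (star s) = s
  re2 : ∀ s t, defined (star s) (star t) →
    defined (star t) (star s) ∧ mul (star s) (star t) = mul (star t) (star s)
  re3 : ∀ s t, defined (star s) (star t) → mul (star s) (star t) = star (mul s (star t))
  re4 : ∀ s t, defined s t → star (mul s t) = star (mul (star s) t)
  plus_star : ∀ s, star (plus s) = plus s
  star_plus : ∀ s, plus (star s) = star s

/-- The set of projections `U = S⁺ = S*`. -/
def EhresmannSgpd.projections {S : Type u} (E : EhresmannSgpd S) : Set S :=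
  {e | ∃ s, e = E.plus s}

/-- `s ≤_l t` : `s⁺t` is defined and `s⁺t = s`. -/
def EhresmannSgpd.lel {S : Type u} (E : EhresmannSgpd S) (s t : S) : Prop :=
  E.defined (E.plus s) t ∧ E.mul (E.plus s) t = s

/-- `s ≤_r t` : `ts*` is defined and `ts* = s`. -/
def EhresmannSgpd.ler {S : Type u} (E : EhresmannSgpd S) (s t : S) : Prop :=
  E.defined t (E.star s) ∧ E.mul t (E.star s) = s

/-- A two-sided restriction semigroupoid. -/
structure RestrictionSgpd (S : Type u) extends Semigroupoid S where
  plus : S → S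
  star : S → S
  lr1 : ∀ s, defined (plus s) s ∧ mul (plus s) s = s
  lr2 : ∀ s t, defined (plus s) (plus t) →
    defined (plus t) (plus s) ∧ mul (plus s) (plus t) = mul (plus t) (plus s)
  lr3 : ∀ s t, defined (plus s) (plus t) → mul (plus s) (plus t) = plus (mul (plus s) t)
  lr4 : ∀ s t, defined s t →
    defined (plus (mul s t)) s ∧ mul s (plus t) = mul (plus (mul s t)) s
  rr1 : ∀ s, defined s (star s) ∧ mul s (star s) = s
  rr2 : ∀ s t, defined (star s) (star t) →
    defined (star t) (star s) ∧ mul (star s) (star t) = mul (star t) (star s)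
  rr3 : ∀ s t, defined (star s) (star t) → mul (star s) (star t) = star (mul s (star t))
  rr4 : ∀ s t, defined s t →
    defined t (star (mul s t)) ∧ mul (star s) t = mul t (star (mul s t))
  plus_star : ∀ s, star (plus s) = plus s
  star_plus : ∀ s, plus (star s) = star s

/-- The set of projections of a restriction semigroupoid. -/
def RestrictionSgpd.projections {S : Type u} (R : RestrictionSgpd S) : Set S :=
  {e | ∃ s, e = R.plus s}

/-- The natural partial order of a restriction semigroupoid: `s ≤ t` iff `s⁺t = s`. -/
def RestrictionSgpd.natLe {S : Type u} (R : RestrictionSgpd S) (s t : S) : Prop :=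
  R.defined (R.plus s) t ∧ R.mul (R.plus s) t = s

/-- A local meet-semilattice: a commutative semigroupoid in which every element is idempotent. -/
structure LocalMeetSemilattice (S : Type u) extends Semigroupoid S where
  idem_def : ∀ e, defined e e
  idem : ∀ e, mul e e = e
  comm_def : ∀ e f, defined e f → defined f e
  comm : ∀ e f, defined e f → mul e f = mul f e

/-- A local biordered Ehresmann category. -/
structure LBEC (C : Type u) where
  obj : Set C
  dom : C → C
  cod : C → C
  comp : C → C → C
  dom_mem : ∀ x, dom x ∈ obj
  cod_mem : ∀ x, cod x ∈ obj
  dom_comp : ∀ x y, dom x = cod y → dom (comp x y) = dom y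
  cod_comp : ∀ x y, dom x = cod y → cod (comp x y) = cod x
  comp_assoc : ∀ x y z, dom x = cod y → dom y = cod z →
    comp (comp x y) z = comp x (comp y z)
  dom_obj : ∀ e, e ∈ obj → dom e = e
  cod_obj : ∀ e, e ∈ obj → cod e = e
  comp_id : ∀ x e, e ∈ obj → dom x = e → comp x e = x
  id_comp : ∀ y e, e ∈ obj → cod y = e → comp e y = y
  lel : C → C → Prop
  ler : C → C → Prop
  lel_refl : ∀ x, lel x x
  lel_antisymm : ∀ x y, lel x y → lel y x → x = y
  lel_trans : ∀ x y z, lel x y → lel y z → lel x z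
  ler_refl : ∀ x, ler x x
  ler_antisymm : ∀ x y, ler x y → ler y x → x = y
  ler_trans : ∀ x y z, ler x y → ler y z → ler x z
  lel_dom : ∀ x y, lel x y → lel (dom x) (dom y)
  lel_cod : ∀ x y, lel x y → lel (cod x) (cod y)
  ler_dom : ∀ x y, ler x y → ler (dom x) (dom y)
  ler_cod : ∀ x y, ler x y → ler (cod x) (cod y)
  lel_comp : ∀ x y x' y', lel x y → lel x' y' → dom x = cod x' → dom y = cod y' →
    lel (comp x x') (comp y y')
  ler_comp : ∀ x y x' y', ler x y → ler x' y' → dom x = cod x' → dom y = cod y' →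
    ler (comp x x') (comp y y')
  cores : C → C → C
  cores_le : ∀ e x, e ∈ obj → lel e (cod x) → lel (cores e x) x
  cod_cores : ∀ e x, e ∈ obj → lel e (cod x) → cod (cores e x) = e
  cores_unique : ∀ e x y, e ∈ obj → lel e (cod x) → lel y x → cod y = e → y = cores e x
  res : C → C → C
  res_le : ∀ x e, e ∈ obj → ler e (dom x) → ler (res x e) x
  dom_res : ∀ x e, e ∈ obj → ler e (dom x) → dom (res x e) = e
  res_unique : ∀ x e y, e ∈ obj → ler e (dom x) → ler y x → dom y = e → y = res x e
  mdef : C → C → Prop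
  meet : C → C → C
  meet_mem : ∀ e f, e ∈ obj → f ∈ obj → mdef e f → meet e f ∈ obj
  mdef_self : ∀ e, e ∈ obj → mdef e e
  meet_self : ∀ e, e ∈ obj → meet e e = e
  mdef_comm : ∀ e f, e ∈ obj → f ∈ obj → mdef e f → mdef f e
  meet_comm : ∀ e f, e ∈ obj → f ∈ obj → mdef e f → meet e f = meet f e
  meet_assoc₁ : ∀ e f g, e ∈ obj → f ∈ obj → g ∈ obj → mdef e f → mdef f g →
    mdef (meet e f) g ∧ mdef e (meet f g) ∧ meet (meet e f) g = meet e (meet f g)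
  meet_assoc₂ : ∀ e f g, e ∈ obj → f ∈ obj → g ∈ obj → mdef e f → mdef (meet e f) g →
    mdef f g ∧ mdef e (meet f g) ∧ meet (meet e f) g = meet e (meet f g)
  meet_assoc₃ : ∀ e f g, e ∈ obj → f ∈ obj → g ∈ obj → mdef f g → mdef e (meet f g) →
    mdef e f ∧ mdef (meet e f) g ∧ meet (meet e f) g = meet e (meet f g)
  ec4l : ∀ e f, e ∈ obj → f ∈ obj → (lel e f ↔ mdef e f ∧ meet e f = e)
  ec4r : ∀ e f, e ∈ obj → f ∈ obj → (ler e f ↔ mdef e f ∧ meet e f = e)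
  ec5 : ∀ x z, (∃ y, lel x y ∧ ler y z) ↔ (∃ y, ler x y ∧ lel y z)
  ec6 : ∀ x y e, e ∈ obj → lel x y → mdef (dom x) e →
    lel (res x (meet (dom x) e)) (res y (meet (dom y) e))
  ec7 : ∀ x y e, e ∈ obj → ler x y → mdef e (cod x) →
    ler (cores (meet e (cod x)) x) (cores (meet e (cod y)) y)

/-- `x ⊗ y` is defined iff `D(x) ∧ R(y)` is defined. -/
def LBEC.pdef {C : Type u} (E : LBEC C) (x y : C) : Prop :=
  E.mdef (E.dom x) (E.cod y)

/-- The pseudo-product `x ⊗ y = (x|e) ∘ (e|y)` where `e = D(x) ∧ R(y)`. -/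
def LBEC.pprod {C : Type u} (E : LBEC C) (x y : C) : C :=
  E.comp (E.res x (E.meet (E.dom x) (E.cod y))) (E.cores (E.meet (E.dom x) (E.cod y)) y)

/-- A locally inductive category. -/
structure LInductiveCat (C : Type u) where
  obj : Set C
  dom : C → C
  cod : C → C
  comp : C → C → C
  dom_mem : ∀ x, dom x ∈ obj
  cod_mem : ∀ x, cod x ∈ obj
  dom_comp : ∀ x y, dom x = cod y → dom (comp x y) = dom y
  cod_comp : ∀ x y, dom x = cod y → cod (comp x y) = cod x
  comp_assoc : ∀ x y z, dom x = cod y → dom y = cod z →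
    comp (comp x y) z = comp x (comp y z)
  dom_obj : ∀ e, e ∈ obj → dom e = e
  cod_obj : ∀ e, e ∈ obj → cod e = e
  comp_id : ∀ x e, e ∈ obj → dom x = e → comp x e = x
  id_comp : ∀ y e, e ∈ obj → cod y = e → comp e y = y
  le : C → C → Prop
  le_refl : ∀ x, le x x
  le_antisymm : ∀ x y, le x y → le y x → x = y
  le_trans : ∀ x y z, le x y → le y z → le x z
  le_dom : ∀ x y, le x y → le (dom x) (dom y)
  le_cod : ∀ x y, le x y → le (cod x) (cod y)
  le_comp : ∀ x y x' y', le x y → le x' y' → dom x = cod x' → dom y = cod y' →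
    le (comp x x') (comp y y')
  res : C → C → C
  res_le : ∀ x e, e ∈ obj → le e (dom x) → le (res x e) x
  dom_res : ∀ x e, e ∈ obj → le e (dom x) → dom (res x e) = e
  res_unique : ∀ x e y, e ∈ obj → le e (dom x) → le y x → dom y = e → y = res x e
  cores : C → C → C
  cores_le : ∀ e x, e ∈ obj → le e (cod x) → le (cores e x) x
  cod_cores : ∀ e x, e ∈ obj → le e (cod x) → cod (cores e x) = e
  cores_unique : ∀ e x y, e ∈ obj → le e (cod x) → le y x → cod y = e → y = cores e x
  mdef : C → C → Prop
  meet : C → C → C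
  meet_mem : ∀ e f, e ∈ obj → f ∈ obj → mdef e f → meet e f ∈ obj
  mdef_self : ∀ e, e ∈ obj → mdef e e
  meet_self : ∀ e, e ∈ obj → meet e e = e
  mdef_comm : ∀ e f, e ∈ obj → f ∈ obj → mdef e f → mdef f e
  meet_comm : ∀ e f, e ∈ obj → f ∈ obj → mdef e f → meet e f = meet f e
  meet_assoc₁ : ∀ e f g, e ∈ obj → f ∈ obj → g ∈ obj → mdef e f → mdef f g →
    mdef (meet e f) g ∧ mdef e (meet f g) ∧ meet (meet e f) g = meet e (meet f g)
  meet_assoc₂ : ∀ e f g, e ∈ obj → f ∈ obj → g ∈ obj → mdef e f → mdef (meet e f) g →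
    mdef f g ∧ mdef e (meet f g) ∧ meet (meet e f) g = meet e (meet f g)
  meet_assoc₃ : ∀ e f g, e ∈ obj → f ∈ obj → g ∈ obj → mdef f g → mdef e (meet f g) →
    mdef e f ∧ mdef (meet e f) g ∧ meet (meet e f) g = meet e (meet f g)
  le_meet : ∀ e f, e ∈ obj → f ∈ obj → (le e f ↔ mdef e f ∧ meet e f = e)

/-- `Cat` is the local biordered Ehresmann category `C(S)` associated with the two-sided
Ehresmann semigroupoid `E`. -/
def IsCofS {S : Type u} (E : EhresmannSgpd S) (Cat : LBEC S) : Prop :=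
  Cat.obj = E.projections ∧
  Cat.dom = E.star ∧
  Cat.cod = E.plus ∧
  (∀ s t, E.star s = E.plus t → Cat.comp s t = E.mul s t) ∧
  Cat.lel = E.lel ∧
  Cat.ler = E.ler ∧
  (∀ e f, e ∈ E.projections → f ∈ E.projections →
    (Cat.mdef e f ↔ E.defined e f) ∧ (E.defined e f → Cat.meet e f = E.mul e f))

/-- `E` is the two-sided Ehresmann semigroupoid `S(C)` associated with the local biordered
Ehresmann category `Cat`. -/
def IsSofC {C : Type u} (Cat : LBEC C) (E : EhresmannSgpd C) : Prop :=
  (E.defined = Cat.pdef) ∧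
  (∀ x y, E.defined x y → E.mul x y = Cat.pprod x y) ∧
  E.plus = Cat.cod ∧
  E.star = Cat.dom

/-- `L` is the locally inductive category `C(S)` associated with the two-sided restriction
semigroupoid `R`. -/
def IsCofSRes {S : Type u} (R : RestrictionSgpd S) (L : LInductiveCat S) : Prop :=
  L.obj = R.projections ∧
  L.dom = R.star ∧
  L.cod = R.plus ∧
  (∀ s t, R.star s = R.plus t → L.comp s t = R.mul s t) ∧
  L.le = R.natLe ∧
  (∀ e f, e ∈ R.projections → f ∈ R.projections →
    (L.mdef e f ↔ R.defined e f) ∧ (R.defined e f → L.meet e f = R.mul e f))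

/-- `t` is a pseudo-inverse of `s` in the semigroupoid `Sg`. -/
def Semigroupoid.PInv {S : Type u} (Sg : Semigroupoid S) (s t : S) : Prop :=
  Sg.defined s t ∧ Sg.defined t s ∧ Sg.mul (Sg.mul s t) s = s ∧ Sg.mul (Sg.mul t s) t = t

/-- The restriction semigroupoid `R` is an inverse semigroupoid with `s⁺ = ss⁻¹`, `s* = s⁻¹s`. -/
def RestrictionSgpd.IsInverse {S : Type u} (R : RestrictionSgpd S) : Prop :=
  ∃ inv : S → S,
    (∀ s, R.toSemigroupoid.PInv s (inv s)) ∧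
    (∀ s t, R.toSemigroupoid.PInv s t → t = inv s) ∧
    (∀ s, R.plus s = R.mul s (inv s) ∧ R.star s = R.mul (inv s) s)

/-- `y` is an inverse of `x` in the category `L`. -/
def LInductiveCat.IsInv {C : Type u} (L : LInductiveCat C) (x y : C) : Prop :=
  L.dom y = L.cod x ∧ L.cod y = L.dom x ∧ L.comp x y = L.cod x ∧ L.comp y x = L.dom x

/-- The category `L` is a groupoid: every element has a unique inverse. -/
def LInductiveCat.IsGroupoid {C : Type u} (L : LInductiveCat C) : Prop :=
  ∀ x, ∃! y, L.IsInv x y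

/-- Inversion in `L` is order-preserving (condition (ig1) of locally inductive groupoids). -/
def LInductiveCat.InvOrdPres {C : Type u} (L : LInductiveCat C) : Prop :=
  ∀ x y x' y', L.IsInv x x' → L.IsInv y y' → L.le x y → L.le x' y'

/-- `(S0, D, R)` is a category structure on the semigroupoid `Sg`. -/
def Semigroupoid.CatStructOn {S : Type u} (Sg : Semigroupoid S) (S0 : Set S)
    (D R : S → S) : Prop :=
  (∀ s, D s ∈ S0) ∧ (∀ s, R s ∈ S0) ∧
  (∀ s t, Sg.defined s t ↔ D s = R t) ∧
  (∀ s t, Sg.defined s t → D (Sg.mul s t) = D t ∧ R (Sg.mul s t) = R s) ∧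
  (∀ e, e ∈ S0 → D e = e ∧ R e = e) ∧
  (∀ s, Sg.mul s (D s) = s) ∧
  (∀ t, Sg.mul (R t) t = t)

/-- `(U0, d, r)` is a category structure on the sub-semigroupoid of `Sg` with underlying
set `U`. -/
def Semigroupoid.CatStructOnSubset {S : Type u} (Sg : Semigroupoid S) (U : Set S)
    (U0 : Set S) (d r : S → S) : Prop :=
  U0 ⊆ U ∧
  (∀ e, e ∈ U → d e ∈ U0 ∧ r e ∈ U0) ∧
  (∀ e f, e ∈ U → f ∈ U → (Sg.defined e f ↔ d e = r f)) ∧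
  (∀ e f, e ∈ U → f ∈ U → Sg.defined e f →
    d (Sg.mul e f) = d f ∧ r (Sg.mul e f) = r e) ∧
  (∀ e, e ∈ U0 → d e = e ∧ r e = e) ∧
  (∀ e, e ∈ U → Sg.mul e (d e) = e ∧ Sg.mul (r e) e = e)

/-- A (2,1,1)-morphism between two-sided Ehresmann semigroupoids. -/
def Is211 {S : Type u} {T : Type u} (E : EhresmannSgpd S) (F : EhresmannSgpd T)
    (φ : S → T) : Prop :=
  (∀ s t, E.defined s t →
    F.defined (φ s) (φ t) ∧ φ (E.mul s t) = F.mul (φ s) (φ t)) ∧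
  (∀ s, φ (E.plus s) = F.plus (φ s)) ∧
  (∀ s, φ (E.star s) = F.star (φ s))

/-- An inductive functor between local biordered Ehresmann categories. -/
def IndFunctor {C : Type u} {D : Type u} (A : LBEC C) (B : LBEC D) (φ : C → D) : Prop :=
  (∀ x, φ (A.dom x) = B.dom (φ x)) ∧
  (∀ x, φ (A.cod x) = B.cod (φ x)) ∧
  (∀ x y, A.dom x = A.cod y → φ (A.comp x y) = B.comp (φ x) (φ y)) ∧
  (∀ x y, A.lel x y → B.lel (φ x) (φ y)) ∧
  (∀ x y, A.ler x y → B.ler (φ x) (φ y)) ∧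
  (∀ e f, e ∈ A.obj → f ∈ A.obj → A.mdef e f →
    B.mdef (φ e) (φ f) ∧ φ (A.meet e f) = B.meet (φ e) (φ f))

/-- A ∨-premorphism between two-sided restriction semigroupoids. -/
def VPre {S : Type u} {T : Type u} (R1 : RestrictionSgpd S) (R2 : RestrictionSgpd T)
    (φ : S → T) : Prop :=
  (∀ s t, R1.defined s t →
    R2.defined (φ s) (φ t) ∧ R2.natLe (φ (R1.mul s t)) (R2.mul (φ s) (φ t))) ∧
  (∀ s, φ (R1.plus s) = R2.plus (φ s)) ∧
  (∀ s, φ (R1.star s) = R2.star (φ s))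

/-- An ordered functor between locally inductive categories. -/
def OrdFunctor {C : Type u} {D : Type u} (A : LInductiveCat C) (B : LInductiveCat D)
    (φ : C → D) : Prop :=
  (∀ x, φ (A.dom x) = B.dom (φ x)) ∧
  (∀ x, φ (A.cod x) = B.cod (φ x)) ∧
  (∀ x y, A.dom x = A.cod y → φ (A.comp x y) = B.comp (φ x) (φ y)) ∧
  (∀ x y, A.le x y → B.le (φ x) (φ y))

/-- Composition of binary relations on `X`. -/
def rcomp {X : Type u} (R S : Set (X × X)) : Set (X × X) :=
  {p | ∃ z, (p.1, z) ∈ R ∧ (z, p.2) ∈ S}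

/-- `R⁺ = {(x,x) : (x,y) ∈ R for some y}`. -/
def rplus {X : Type u} (R : Set (X × X)) : Set (X × X) :=
  {p | p.1 = p.2 ∧ ∃ y, (p.1, y) ∈ R}

/-- `R* = {(y,y) : (x,y) ∈ R for some x}`. -/
def rstar {X : Type u} (R : Set (X × X)) : Set (X × X) :=
  {p | p.1 = p.2 ∧ ∃ x, (x, p.2) ∈ R}

open Classical in
/-- The partial product on a disjoint union of meet-semilattices: the meet when both elements lie
in the same component. Otherwise the value is the left argument, which carries no meaning. -/
noncomputable def sigmaMul {I : Type u} {X : I → Type u} [∀ i, SemilatticeInf (X i)]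
    (a b : (i : I) × X i) : (i : I) × X i :=
  if h : a.1 = b.1 then ⟨a.1, a.2 ⊓ cast (congrArg X h.symm) b.2⟩ else a

theorem sigmaMul_fst {I : Type u} {X : I → Type u} [∀ i, SemilatticeInf (X i)]
    (a b : (i : I) × X i) : (sigmaMul a b).1 = a.1 := by
  unfold sigmaMul
  split <;> rfl

theorem sigmaMul_mk {I : Type u} {X : I → Type u} [∀ i, SemilatticeInf (X i)]
    (i : I) (x y : X i) : sigmaMul (⟨i, x⟩ : (i : I) × X i) ⟨i, y⟩ = ⟨i, x ⊓ y⟩ := by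
  simp [sigmaMul]

theorem sigmaMul_assoc {I : Type u} {X : I → Type u} [∀ i, SemilatticeInf (X i)]
    (a b c : (i : I) × X i) (hab : a.1 = b.1) (hbc : b.1 = c.1) :
    sigmaMul (sigmaMul a b) c = sigmaMul a (sigmaMul b c) := by
  obtain ⟨i, x⟩ := a
  obtain ⟨j, y⟩ := b
  obtain ⟨k, z⟩ := c
  dsimp only at hab hbc
  subst hab hbc
  simp only [sigmaMul_mk, inf_assoc]

/-- The disjoint union of a family of meet-semilattices, as a local meet-semilattice. -/
noncomputable def sigmaLocalMeetSemilattice {I : Type u} (X : I → Type u)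
    [∀ i, SemilatticeInf (X i)] : LocalMeetSemilattice ((i : I) × X i) where
  defined a b := a.1 = b.1
  mul := sigmaMul
  assoc₁ s t r hst htr :=
    ⟨(sigmaMul_fst s t).trans (hst.trans htr), hst.trans (sigmaMul_fst t r).symm,
      sigmaMul_assoc s t r hst htr⟩
  assoc₂ s t r hst h := by
    rw [sigmaMul_fst] at h
    have htr := hst.symm.trans h
    exact ⟨htr, hst.trans (sigmaMul_fst t r).symm, sigmaMul_assoc s t r hst htr⟩
  assoc₃ s t r htr h := by
    rw [sigmaMul_fst] at h
    exact ⟨h, (sigmaMul_fst s t).trans (h.trans htr), sigmaMul_assoc s t r h htr⟩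
  idem_def _ := rfl
  idem := fun ⟨i, x⟩ => by rw [sigmaMul_mk, inf_idem]
  comm_def _ _ h := h.symm
  comm := by
    rintro ⟨i, x⟩ ⟨j, y⟩ h
    dsimp only at h
    subst h
    rw [sigmaMul_mk, sigmaMul_mk, inf_comm]

/-- Transitivity of `ω`: `(gf)h = (fg)h` is defined, so associativity makes `fh` defined. -/
theorem LocalMeetSemilattice.defined_trans {S : Type u} (L : LocalMeetSemilattice S) {f g h : S}
    (hfg : L.defined f g) (hgh : L.defined g h) : L.defined f h := by
  have h1 : L.defined (L.mul f g) h := (L.assoc₁ f g h hfg hgh).1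
  rw [L.comm f g hfg] at h1
  exact (L.assoc₂ g f h (L.comm_def f g hfg) h1).1

/-- Local meet-semilattices are exactly disjoint unions of meet-semilattices:
(i) the disjoint union (sigma type) of a family of meet-semilattices, with `xy` defined iff
`x,y` lie in the same component and equal to the meet there, is a local meet-semilattice;
(ii) conversely, in a local meet-semilattice the relation `ω` (`s ω t` iff `st` is defined)
is an equivalence relation, each `ω`-class is closed under the operation, and on each
`ω`-class the operation gives a meet-semilattice (a partial order `st = s` with `st` the
greatest lower bound of `s` and `t`). -/
theorem stmt5 (I : Type u) (X : I → Type u) [∀ i, SemilatticeInf (X i)] :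
    (∃ L : LocalMeetSemilattice ((i : I) × X i),
      (∀ a b : (i : I) × X i, L.defined a b ↔ a.1 = b.1) ∧
      (∀ (a b : (i : I) × X i) (h : a.1 = b.1),
        L.mul a b = ⟨a.1, a.2 ⊓ cast (congrArg X h.symm) b.2⟩)) ∧
    (∀ (S : Type u) (L : LocalMeetSemilattice S),
      Equivalence L.defined ∧
      (∀ e f g, L.defined e f → L.defined e g → L.defined e (L.mul f g)) ∧
      (∀ f g, L.defined f g → L.mul f g = f → L.mul g f = g → f = g) ∧
      (∀ f g h, L.defined f g → L.defined g h →
        L.mul f g = f → L.mul g h = g → L.mul f h = f) ∧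
      (∀ f g, L.defined f g →
        L.mul (L.mul f g) f = L.mul f g ∧ L.mul (L.mul f g) g = L.mul f g ∧
        ∀ u, L.defined u f → L.mul u f = u → L.mul u g = u →
          L.mul u (L.mul f g) = u)) := by
  refine ⟨⟨sigmaLocalMeetSemilattice X, fun _ _ => Iff.rfl, fun a b h => dif_pos h⟩,
    fun S L => ⟨⟨L.idem_def, fun h => L.comm_def _ _ h, L.defined_trans⟩, ?_, ?_, ?_, ?_⟩⟩
  · intro e f g hef heg
    exact (L.assoc₁ e f g hef (L.defined_trans (L.comm_def e f hef) heg)).2.1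
  · intro f g hd hfg hgf
    rw [← hfg, L.comm f g hd, hgf]
  · intro f g h hfg hgh h1 h2
    have := (L.assoc₁ f g h hfg hgh).2.2
    rwa [h1, h2, h1] at this
  · intro f g hd
    have hgf := L.comm_def f g hd
    refine ⟨?_, ?_, ?_⟩
    -- `(fg)f = (gf)f = g(ff) = gf = fg`
    · rw [L.comm f g hd, (L.assoc₁ g f f hgf (L.idem_def f)).2.2, L.idem]
    · rw [(L.assoc₁ f g g hd (L.idem_def g)).2.2, L.idem]
    · intro u huf h1 h2
      rw [← (L.assoc₁ u f g huf hd).2.2, h1, h2]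
end

section
/- Let (C, ≤_l, ≤_r) be a local biordered Ehresmann category with pseudo-product x ⊗ y = (x|e) ∘ (e|y) defined whenever e = D(x) ∧ R(y) is defined. Then for x,y,z ∈ C the following are equivalent: (i) x ⊗ y and y ⊗ z are defined; (ii) x ⊗ y and (x ⊗ y) ⊗ z are defined; (iii) y ⊗ z and x ⊗ (y ⊗ z) are defined. -/
/-!
Composition with `x` on the left does not change the domain of the right factor, so
`D(x ⊗ y) = D(e|y)` with `e = D(x) ∧ R(y)`, and `e|y ≤_l y` gives `D(x ⊗ y) ≤ D(y)`.
Dually `R(y ⊗ z) ≤ R(y)`. In a local meet-semilattice, comparable elements `f ≤ g` have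
defined meets with exactly the same elements (`LBEC.mdef_congr_of_le`): this is associativity
applied to `f = f ∧ g`. Hence `D(x ⊗ y) ∧ R(z)` is defined iff `D(y) ∧ R(z)` is, and
`D(x) ∧ R(y ⊗ z)` is defined iff `D(x) ∧ R(y)` is.
-/

universe u

/-- If `f ≤ g` then `f ∧ h` is defined iff `g ∧ h` is. The order is spelled out through the
meet, so that the lemma serves both `≤_l` and `≤_r`. -/
theorem LBEC.mdef_congr_of_le {C : Type u} (E : LBEC C) {f g h : C} (hf : f ∈ E.obj)
    (hg : g ∈ E.obj) (hh : h ∈ E.obj) (hle : E.mdef f g ∧ E.meet f g = f) :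
    E.mdef f h ↔ E.mdef g h := by
  constructor
  · intro H
    exact (E.meet_assoc₂ f g h hf hg hh hle.1 (by rwa [hle.2])).1
  · intro H
    have := (E.meet_assoc₁ f g h hf hg hh hle.1 H).1
    rwa [hle.2] at this

theorem LBEC.meet_le_right {C : Type u} (E : LBEC C) {e f : C} (he : e ∈ E.obj)
    (hf : f ∈ E.obj) (h : E.mdef e f) :
    E.mdef (E.meet e f) f ∧ E.meet (E.meet e f) f = E.meet e f := by
  obtain ⟨h1, -, h3⟩ := E.meet_assoc₁ e f f he hf hf h (E.mdef_self f hf)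
  exact ⟨h1, by rw [h3, E.meet_self f hf]⟩

theorem LBEC.meet_le_left {C : Type u} (E : LBEC C) {e f : C} (he : e ∈ E.obj)
    (hf : f ∈ E.obj) (h : E.mdef e f) :
    E.mdef (E.meet e f) e ∧ E.meet (E.meet e f) e = E.meet e f := by
  rw [E.meet_comm e f he hf h]
  exact E.meet_le_right hf he (E.mdef_comm e f he hf h)

/-- `D(x ⊗ y) ≤ D(y)` and `R(x ⊗ y) ≤ R(x)`. -/
theorem LBEC.pprod_dom_cod_le {C : Type u} (E : LBEC C) {x y : C} (h : E.pdef x y) :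
    E.lel (E.dom (E.pprod x y)) (E.dom y) ∧ E.ler (E.cod (E.pprod x y)) (E.cod x) := by
  have hx := E.dom_mem x
  have hy := E.cod_mem y
  have he := E.meet_mem _ _ hx hy h
  have hl := (E.ec4l _ _ he hy).2 (E.meet_le_right hx hy h)
  have hr := (E.ec4r _ _ he hx).2 (E.meet_le_left hx hy h)
  have hc : E.dom (E.res x (E.meet (E.dom x) (E.cod y))) =
      E.cod (E.cores (E.meet (E.dom x) (E.cod y)) y) := by
    rw [E.dom_res x _ he hr, E.cod_cores _ y he hl]
  unfold LBEC.pprod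
  rw [E.dom_comp _ _ hc, E.cod_comp _ _ hc]
  exact ⟨E.lel_dom _ _ (E.cores_le _ _ he hl), E.ler_cod _ _ (E.res_le _ _ he hr)⟩

/-- In a local biordered Ehresmann category, for the pseudo-product the
following are equivalent: (i) `x ⊗ y` and `y ⊗ z` are defined; (ii) `x ⊗ y` and
`(x ⊗ y) ⊗ z` are defined; (iii) `y ⊗ z` and `x ⊗ (y ⊗ z)` are defined. -/
theorem stmt6 {C : Type u} (E : LBEC C) (x y z : C) :
    ((E.pdef x y ∧ E.pdef y z) ↔ (E.pdef x y ∧ E.pdef (E.pprod x y) z)) ∧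
    ((E.pdef x y ∧ E.pdef y z) ↔ (E.pdef y z ∧ E.pdef x (E.pprod y z))) := by
  refine ⟨and_congr_right fun hxy => ?_, and_comm.trans (and_congr_right fun hyz => ?_)⟩
  · have hle := (E.ec4l _ _ (E.dom_mem _) (E.dom_mem _)).1 (E.pprod_dom_cod_le hxy).1
    exact (E.mdef_congr_of_le (E.dom_mem _) (E.dom_mem _) (E.cod_mem z) hle).symm
  · have hle := (E.ec4r _ _ (E.cod_mem _) (E.cod_mem _)).1 (E.pprod_dom_cod_le hyz).2
    have hcongr := E.mdef_congr_of_le (E.cod_mem _) (E.cod_mem _) (E.dom_mem x) hle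
    have hswap (w : C) : E.pdef x w ↔ E.mdef (E.cod w) (E.dom x) :=
      ⟨E.mdef_comm _ _ (E.dom_mem x) (E.cod_mem w), E.mdef_comm _ _ (E.cod_mem w) (E.dom_mem x)⟩
    rw [hswap, hswap, hcongr]
end

section
/- Let (C, ≤_l, ≤_r) be a local biordered Ehresmann category. Then the set C, endowed with the pseudo-product ⊗ (where x ⊗ y = (x|e) ∘ (e|y) whenever e = D(x) ∧ R(y) is defined), is a semigroupoid; in particular, whenever x ⊗ y and y ⊗ z are defined, all of (x ⊗ y) ⊗ z and x ⊗ (y ⊗ z) are defined and (x ⊗ y) ⊗ z = x ⊗ (y ⊗ z). -/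
/-!
Write `e = D(x) ∧ R(y)` and `g = D(y) ∧ R(z)`. Restricting the composite `x ⊗ y = (x|e) ∘ (e|y)` to
`f = D(e|y) ∧ R(z)` pushes the restriction through both factors (`LBEC.res_comp`), so that
`(x ⊗ y) ⊗ z = (x|R(u)) ∘ u ∘ (D(u)|z)` with `u = (e|y)|f`. Dually (`LBEC.cores_comp`),
`x ⊗ (y ⊗ z) = (x|R(v)) ∘ v ∘ (D(v)|z)` with `v = k|(y|g)` and `k = D(x) ∧ R(y|g)`.
Everything therefore reduces to `u = v` (`LBEC.middle_eq`): (ec6) applied to `e|y ≤_l y` gives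
`u ≤_l y|g`, hence `u ≤_l v`; (ec7) applied to `y|g ≤_r y` gives `v ≤_r e|y`, hence `v ≤_r u`.
Thus `R(u) = R(v)`, and uniqueness of corestrictions forces `u = v`.

The definedness clauses follow from `D(x ⊗ y) ≤ D(y)` and `R(x ⊗ y) ≤ R(x)`, since in a local
meet-semilattice `a ∧ c` is defined iff `b ∧ c` is, whenever `a ≤ b`.
-/


universe u

namespace LBEC

variable {C : Type u} (E : LBEC C)

/-! ### Meets of objects -/

lemma ler_iff_lel {e f : C} (he : e ∈ E.obj) (hf : f ∈ E.obj) : E.ler e f ↔ E.lel e f := by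
  rw [E.ec4l e f he hf, E.ec4r e f he hf]

lemma meet_lel_left {e f : C} (he : e ∈ E.obj) (hf : f ∈ E.obj) (h : E.mdef e f) :
    E.lel (E.meet e f) e := by
  have hm := E.meet_mem e f he hf h
  obtain ⟨-, h2, h3⟩ := E.meet_assoc₁ e e f he he hf (E.mdef_self e he) h
  rw [E.meet_self e he] at h3
  rw [E.ec4l _ _ hm he]
  exact ⟨E.mdef_comm _ _ he hm h2, by rw [← E.meet_comm _ _ he hm h2, ← h3]⟩

lemma meet_lel_right {e f : C} (he : e ∈ E.obj) (hf : f ∈ E.obj) (h : E.mdef e f) :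
    E.lel (E.meet e f) f := by
  rw [E.meet_comm e f he hf h]
  exact E.meet_lel_left hf he (E.mdef_comm e f he hf h)

lemma lel_meet {h e f : C} (hh : h ∈ E.obj) (he : e ∈ E.obj) (hf : f ∈ E.obj)
    (hef : E.mdef e f) (h1 : E.lel h e) (h2 : E.lel h f) : E.lel h (E.meet e f) := by
  obtain ⟨d1, m1⟩ := (E.ec4l _ _ hh he).1 h1
  obtain ⟨d2, m2⟩ := (E.ec4l _ _ hh hf).1 h2
  obtain ⟨-, a2, a3⟩ := E.meet_assoc₁ h e f hh he hf d1 hef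
  rw [m1, m2] at a3
  exact (E.ec4l _ _ hh (E.meet_mem e f he hf hef)).2 ⟨a2, a3.symm⟩

/-- Comparable objects admit meets with exactly the same objects. -/
lemma mdef_iff_left {a b c : C} (ha : a ∈ E.obj) (hb : b ∈ E.obj) (hc : c ∈ E.obj)
    (h : E.lel a b) : E.mdef a c ↔ E.mdef b c := by
  obtain ⟨d, m⟩ := (E.ec4l _ _ ha hb).1 h
  constructor
  · intro hac
    exact (E.meet_assoc₂ a b c ha hb hc d (by rwa [m])).1
  · intro hbc
    have := (E.meet_assoc₁ a b c ha hb hc d hbc).1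
    rwa [m] at this

lemma mdef_iff_right {a b c : C} (ha : a ∈ E.obj) (hb : b ∈ E.obj) (hc : c ∈ E.obj)
    (h : E.lel a b) : E.mdef c a ↔ E.mdef c b :=
  ⟨fun k => E.mdef_comm _ _ hb hc ((E.mdef_iff_left ha hb hc h).1 (E.mdef_comm _ _ hc ha k)),
   fun k => E.mdef_comm _ _ ha hc ((E.mdef_iff_left ha hb hc h).2 (E.mdef_comm _ _ hc hb k))⟩

/-! ### Restrictions and corestrictions -/

lemma lel_dom_of_ler {x y : C} (h : E.ler x y) : E.lel (E.dom x) (E.dom y) :=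
  (E.ler_iff_lel (E.dom_mem x) (E.dom_mem y)).1 (E.ler_dom x y h)

lemma lel_cod_of_ler {x y : C} (h : E.ler x y) : E.lel (E.cod x) (E.cod y) :=
  (E.ler_iff_lel (E.cod_mem x) (E.cod_mem y)).1 (E.ler_cod x y h)

/-- Elements `≤_r`-below a common `w` are the restrictions of `w`, so they are ordered as their
domains are. -/
lemma ler_of_ler_of_dom {v u w : C} (hv : E.ler v w) (hu : E.ler u w)
    (h : E.lel (E.dom v) (E.dom u)) : E.ler v u := by
  have h' := (E.ler_iff_lel (E.dom_mem v) (E.dom_mem u)).2 h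
  have hr := E.res_le u (E.dom v) (E.dom_mem v) h'
  have hd := E.dom_res u (E.dom v) (E.dom_mem v) h'
  have e1 := E.res_unique w (E.dom v) v (E.dom_mem v) (E.ler_dom _ _ hv) hv rfl
  have e2 := E.res_unique w (E.dom v) _ (E.dom_mem v) (E.ler_dom _ _ hv)
    (E.ler_trans _ _ _ hr hu) hd
  have : v = E.res u (E.dom v) := e1.trans e2.symm
  rwa [← this] at hr

/-- Elements `≤_l`-below a common `w` are the corestrictions of `w`, so they are ordered as their
codomains are. -/
lemma lel_of_lel_of_cod {v u w : C} (hv : E.lel v w) (hu : E.lel u w)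
    (h : E.lel (E.cod v) (E.cod u)) : E.lel v u := by
  have hr := E.cores_le (E.cod v) u (E.cod_mem v) h
  have hd := E.cod_cores (E.cod v) u (E.cod_mem v) h
  have e1 := E.cores_unique (E.cod v) w v (E.cod_mem v) (E.lel_cod _ _ hv) hv rfl
  have e2 := E.cores_unique (E.cod v) w _ (E.cod_mem v) (E.lel_cod _ _ hv)
    (E.lel_trans _ _ _ hr hu) hd
  have : v = E.cores (E.cod v) u := e1.trans e2.symm
  rwa [← this] at hr

lemma res_res {x e f : C} (he : e ∈ E.obj) (hf : f ∈ E.obj) (hex : E.ler e (E.dom x))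
    (hfe : E.ler f e) : E.res (E.res x e) f = E.res x f := by
  have hfe' : E.ler f (E.dom (E.res x e)) := by rwa [E.dom_res x e he hex]
  exact E.res_unique x f _ hf (E.ler_trans _ _ _ hfe hex)
    (E.ler_trans _ _ _ (E.res_le _ f hf hfe') (E.res_le x e he hex)) (E.dom_res _ f hf hfe')

lemma cores_cores {x e f : C} (he : e ∈ E.obj) (hf : f ∈ E.obj) (hex : E.lel e (E.cod x))
    (hfe : E.lel f e) : E.cores f (E.cores e x) = E.cores f x := by
  have hfe' : E.lel f (E.cod (E.cores e x)) := by rwa [E.cod_cores e x he hex]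
  exact E.cores_unique f x _ hf (E.lel_trans _ _ _ hfe hex)
    (E.lel_trans _ _ _ (E.cores_le f _ hf hfe') (E.cores_le e x he hex)) (E.cod_cores f _ hf hfe')

/-- The restriction of a composite: restrict the right factor first, then the left one to the
resulting codomain. -/
lemma res_comp {a b f : C} (hab : E.dom a = E.cod b) (hf : f ∈ E.obj) (h : E.ler f (E.dom b)) :
    E.res (E.comp a b) f = E.comp (E.res a (E.cod (E.res b f))) (E.res b f) := by
  have hb := E.res_le b f hf h
  have hc : E.ler (E.cod (E.res b f)) (E.dom a) := by rw [hab]; exact E.ler_cod _ _ hb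
  have hd := E.dom_res a _ (E.cod_mem (E.res b f)) hc
  refine (E.res_unique (E.comp a b) f _ hf (by rwa [E.dom_comp a b hab]) ?_ ?_).symm
  · exact E.ler_comp _ _ _ _ (E.res_le a _ (E.cod_mem _) hc) hb hd hab
  · rw [E.dom_comp _ _ hd, E.dom_res b f hf h]

lemma cores_comp {a b f : C} (hab : E.dom a = E.cod b) (hf : f ∈ E.obj) (h : E.lel f (E.cod a)) :
    E.cores f (E.comp a b) = E.comp (E.cores f a) (E.cores (E.dom (E.cores f a)) b) := by
  have ha := E.cores_le f a hf h
  have hc : E.lel (E.dom (E.cores f a)) (E.cod b) := by rw [← hab]; exact E.lel_dom _ _ ha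
  have hd := E.cod_cores _ b (E.dom_mem (E.cores f a)) hc
  refine (E.cores_unique f (E.comp a b) _ hf (by rwa [E.cod_comp a b hab]) ?_ ?_).symm
  · exact E.lel_comp _ _ _ _ ha (E.cores_le _ b (E.dom_mem _) hc) hd.symm hab
  · rw [E.cod_comp _ _ hd.symm, E.cod_cores f a hf h]

/-- For objects `p`, `q` whose meets with `R(y)`, `D(y)` are defined, `(p ⊗ y) ⊗ q = p ⊗ (y ⊗ q)`,
with both sides expressed through restrictions and corestrictions. -/
lemma middle_eq {y p q : C} (hp : p ∈ E.obj) (hq : q ∈ E.obj)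
    (h1 : E.mdef p (E.cod y)) (h2 : E.mdef (E.dom y) q) :
    E.res (E.cores (E.meet p (E.cod y)) y)
        (E.meet (E.dom (E.cores (E.meet p (E.cod y)) y)) q) =
      E.cores (E.meet p (E.cod (E.res y (E.meet (E.dom y) q))))
        (E.res y (E.meet (E.dom y) q)) := by
  have he := E.meet_mem _ _ hp (E.cod_mem y) h1
  have hep := E.meet_lel_left hp (E.cod_mem y) h1
  have hey := E.meet_lel_right hp (E.cod_mem y) h1
  have hg := E.meet_mem _ _ (E.dom_mem y) hq h2
  have hgy := E.meet_lel_left (E.dom_mem y) hq h2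
  have hgq := E.meet_lel_right (E.dom_mem y) hq h2
  set e := E.meet p (E.cod y) with he_def
  set g := E.meet (E.dom y) q with hg_def
  have hgy' := (E.ler_iff_lel hg (E.dom_mem y)).2 hgy
  have hale := E.cores_le e y he hey
  have hac := E.cod_cores e y he hey
  have hble := E.res_le y g hg hgy'
  have hbd := E.dom_res y g hg hgy'
  set a := E.cores e y with ha_def
  set b := E.res y g with hb_def
  have hda : E.mdef (E.dom a) q :=
    (E.mdef_iff_left (E.dom_mem a) (E.dom_mem y) hq (E.lel_dom _ _ hale)).2 h2
  have hcb : E.mdef p (E.cod b) :=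
    (E.mdef_iff_right (E.cod_mem b) (E.cod_mem y) hp (E.lel_cod_of_ler hble)).2 h1
  have hf := E.meet_mem _ _ (E.dom_mem a) hq hda
  have hfa := E.meet_lel_left (E.dom_mem a) hq hda
  have hk := E.meet_mem _ _ hp (E.cod_mem b) hcb
  have hkb := E.meet_lel_right hp (E.cod_mem b) hcb
  have h6 := E.ec6 a y q hq hale hda
  have h7 := E.ec7 b y p hp hble hcb
  rw [← hg_def, ← hb_def] at h6
  rw [← he_def, ← ha_def] at h7
  set f := E.meet (E.dom a) q with hf_def
  set k := E.meet p (E.cod b) with hk_def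
  have hfa' := (E.ler_iff_lel hf (E.dom_mem a)).2 hfa
  have hule := E.res_le a f hf hfa'
  have hud := E.dom_res a f hf hfa'
  have hvle := E.cores_le k b hk hkb
  have hvc := E.cod_cores k b hk hkb
  set u := E.res a f with hu_def
  set v := E.cores k b with hv_def
  -- `h6 : u ≤_l b` and `h7 : v ≤_r a`; the domains and codomains of `u`, `v` are then compared
  -- through the universal property of the meets defining `f` and `k`.
  have huc : E.lel (E.cod u) (E.cod v) := by
    rw [hvc]
    refine E.lel_meet (E.cod_mem u) hp (E.cod_mem b) hcb ?_ (E.lel_cod _ _ h6)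
    have := E.lel_cod_of_ler hule
    rw [hac] at this
    exact E.lel_trans _ _ _ this hep
  have hvd : E.lel (E.dom v) (E.dom u) := by
    rw [hud]
    refine E.lel_meet (E.dom_mem v) (E.dom_mem a) hq hda (E.lel_dom_of_ler h7) ?_
    have := E.lel_dom _ _ hvle
    rw [hbd] at this
    exact E.lel_trans _ _ _ this hgq
  have hvu : E.ler v u := E.ler_of_ler_of_dom h7 hule hvd
  have hc : E.cod u = E.cod v := E.lel_antisymm _ _ huc (E.lel_cod_of_ler hvu)
  exact E.lel_antisymm _ _ (E.lel_of_lel_of_cod h6 hvle huc)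
    (E.lel_of_lel_of_cod hvle h6 (hc ▸ E.lel_refl _))

/-! ### The pseudo-product -/

lemma dom_res_eq_cod_cores {x y : C} (h : E.pdef x y) :
    E.dom (E.res x (E.meet (E.dom x) (E.cod y))) =
      E.cod (E.cores (E.meet (E.dom x) (E.cod y)) y) := by
  have he := E.meet_mem _ _ (E.dom_mem x) (E.cod_mem y) h
  rw [E.dom_res _ _ he ((E.ler_iff_lel he (E.dom_mem x)).2
      (E.meet_lel_left (E.dom_mem x) (E.cod_mem y) h)),
    E.cod_cores _ _ he (E.meet_lel_right (E.dom_mem x) (E.cod_mem y) h)]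

lemma dom_pprod {x y : C} (h : E.pdef x y) :
    E.dom (E.pprod x y) = E.dom (E.cores (E.meet (E.dom x) (E.cod y)) y) :=
  E.dom_comp _ _ (E.dom_res_eq_cod_cores h)

lemma cod_pprod {x y : C} (h : E.pdef x y) :
    E.cod (E.pprod x y) = E.cod (E.res x (E.meet (E.dom x) (E.cod y))) :=
  E.cod_comp _ _ (E.dom_res_eq_cod_cores h)

lemma pdef_pprod_left_iff {x y : C} (z : C) (h : E.pdef x y) :
    E.pdef (E.pprod x y) z ↔ E.pdef y z := by
  refine E.mdef_iff_left (E.dom_mem _) (E.dom_mem _) (E.cod_mem _) ?_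
  rw [E.dom_pprod h]
  exact E.lel_dom _ _ (E.cores_le _ _ (E.meet_mem _ _ (E.dom_mem x) (E.cod_mem y) h)
    (E.meet_lel_right (E.dom_mem x) (E.cod_mem y) h))

lemma pdef_pprod_right_iff {y z : C} (x : C) (h : E.pdef y z) :
    E.pdef x (E.pprod y z) ↔ E.pdef x y := by
  refine E.mdef_iff_right (E.cod_mem _) (E.cod_mem _) (E.dom_mem _) ?_
  have hg := E.meet_mem _ _ (E.dom_mem y) (E.cod_mem z) h
  rw [E.cod_pprod h]
  exact E.lel_cod_of_ler (E.res_le _ _ hg ((E.ler_iff_lel hg (E.dom_mem y)).2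
    (E.meet_lel_left (E.dom_mem y) (E.cod_mem z) h)))

lemma pprod_assoc {x y z : C} (h1 : E.pdef x y) (h2 : E.pdef y z) :
    E.pprod (E.pprod x y) z = E.pprod x (E.pprod y z) := by
  have hxy := (E.pdef_pprod_left_iff z h1).2 h2
  have hyz := (E.pdef_pprod_right_iff x h2).2 h1
  have hM := E.middle_eq (E.dom_mem x) (E.cod_mem z) h1 h2
  have hc1 := E.dom_res_eq_cod_cores h1
  have hc2 := E.dom_res_eq_cod_cores h2
  have he := E.meet_mem _ _ (E.dom_mem x) (E.cod_mem y) h1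
  have hex := E.meet_lel_left (E.dom_mem x) (E.cod_mem y) h1
  have hey := E.meet_lel_right (E.dom_mem x) (E.cod_mem y) h1
  have hg := E.meet_mem _ _ (E.dom_mem y) (E.cod_mem z) h2
  have hgy := E.meet_lel_left (E.dom_mem y) (E.cod_mem z) h2
  have hgz := E.meet_lel_right (E.dom_mem y) (E.cod_mem z) h2
  have hdp := E.dom_pprod h1
  have hcp := E.cod_pprod h2
  unfold pdef at hxy hyz
  rw [hdp] at hxy
  rw [hcp] at hyz
  have hf := E.meet_mem _ _ (E.dom_mem _) (E.cod_mem z) hxy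
  have hfa := E.meet_lel_left (E.dom_mem _) (E.cod_mem z) hxy
  have hfz := E.meet_lel_right (E.dom_mem _) (E.cod_mem z) hxy
  have hk := E.meet_mem _ _ (E.dom_mem x) (E.cod_mem _) hyz
  have hkx := E.meet_lel_left (E.dom_mem x) (E.cod_mem _) hyz
  have hkb := E.meet_lel_right (E.dom_mem x) (E.cod_mem _) hyz
  have L : E.pprod (E.pprod x y) z = E.comp (E.res (E.pprod x y)
      (E.meet (E.dom (E.pprod x y)) (E.cod z)))
      (E.cores (E.meet (E.dom (E.pprod x y)) (E.cod z)) z) := rfl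
  have R : E.pprod x (E.pprod y z) = E.comp (E.res x
      (E.meet (E.dom x) (E.cod (E.pprod y z))))
      (E.cores (E.meet (E.dom x) (E.cod (E.pprod y z))) (E.pprod y z)) := rfl
  rw [hdp] at L
  rw [hcp] at R
  unfold pprod at L R ⊢
  set e := E.meet (E.dom x) (E.cod y)
  set g := E.meet (E.dom y) (E.cod z)
  have hex' := (E.ler_iff_lel he (E.dom_mem x)).2 hex
  have hgy' := (E.ler_iff_lel hg (E.dom_mem y)).2 hgy
  have hac := E.cod_cores e y he hey
  have hbd := E.dom_res y g hg hgy'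
  set a := E.cores e y
  set b := E.res y g
  set f := E.meet (E.dom a) (E.cod z)
  set k := E.meet (E.dom x) (E.cod b)
  have hfa' := (E.ler_iff_lel hf (E.dom_mem a)).2 hfa
  have hule := E.res_le a f hf hfa'
  have hud := E.dom_res a f hf hfa'
  have hvle := E.cores_le k b hk hkb
  have hvc := E.cod_cores k b hk hkb
  rw [E.res_comp hc1 hf hfa'] at L
  rw [E.cores_comp hc2 hk hkb, ← hM] at R
  rw [← hM] at hvle hvc
  set u := E.res a f
  have hue : E.ler (E.cod u) e := by
    have := E.ler_cod _ _ hule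
    rwa [hac] at this
  have hug : E.lel (E.dom u) g := by
    have := E.lel_dom _ _ hvle
    rwa [hbd] at this
  rw [E.res_res he (E.cod_mem u) hex' hue] at L
  rw [E.cores_cores hg (E.dom_mem u) hgz hug, hud] at R
  -- `L` and `R` now differ only in the bracketing of `x|R(u)`, `u`, `D(u)|z`.
  rw [L, R, ← hvc]
  refine E.comp_assoc _ _ _ ?_ ?_
  · exact E.dom_res _ _ (E.cod_mem u) (E.ler_trans _ _ _ hue hex')
  · rw [hud, E.cod_cores _ _ hf hfz]

end LBEC

/-- The underlying set of a local biordered Ehresmann category, endowed with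
the pseudo-product `⊗`, is a semigroupoid; in particular, whenever `x ⊗ y` and `y ⊗ z` are
defined, so are `(x ⊗ y) ⊗ z` and `x ⊗ (y ⊗ z)`, and they are equal. -/
theorem stmt7 {C : Type u} (E : LBEC C) :
    (∃ Sg : Semigroupoid C, Sg.defined = E.pdef ∧ Sg.mul = E.pprod) ∧
    (∀ x y z, E.pdef x y → E.pdef y z →
      E.pdef (E.pprod x y) z ∧ E.pdef x (E.pprod y z) ∧
      E.pprod (E.pprod x y) z = E.pprod x (E.pprod y z)) := by
  have key : ∀ x y z, E.pdef x y → E.pdef y z →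
      E.pdef (E.pprod x y) z ∧ E.pdef x (E.pprod y z) ∧
      E.pprod (E.pprod x y) z = E.pprod x (E.pprod y z) := fun x y z h1 h2 =>
    ⟨(E.pdef_pprod_left_iff z h1).2 h2, (E.pdef_pprod_right_iff x h2).2 h1, E.pprod_assoc h1 h2⟩
  refine ⟨⟨{ defined := E.pdef, mul := E.pprod, assoc₁ := key, assoc₂ := ?_, assoc₃ := ?_ },
    rfl, rfl⟩, key⟩
  · intro s t r h1 h2
    have h3 := (E.pdef_pprod_left_iff r h1).1 h2
    exact ⟨h3, (key s t r h1 h3).2⟩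
  · intro s t r h1 h2
    have h3 := (E.pdef_pprod_right_iff s h1).1 h2
    obtain ⟨k1, -, k3⟩ := key s t r h3 h1
    exact ⟨h3, k1, k3⟩
end

section
/- Let (S,+,*) be a two-sided Ehresmann semigroupoid with set of projections U. Define C(S) with underlying set S, objects C(S)₀ = U, domain D(s) = s*, range R(s) = s⁺, composition s · t = st whenever s* = t⁺, and partial orders ≤_l (s ≤_l t iff s⁺t is defined and s⁺t = s) and ≤_r (s ≤_r t iff ts* is defined and ts* = s). Then (C(S), ≤_l, ≤_r) is a local biordered Ehresmann category; moreover, in C(S) the restriction of s to e ≤ D(s) is s|e = se and the corestriction of s to e ≤ R(s) is e|s = es. -/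
/-! The category `C(S)` has composition, restriction, corestriction and meet all given by the
product of `S`, so every axiom becomes an identity about products with projections. Two facts
carry the proof: definedness of `st` depends only on `s*` and on `t⁺` (`def_star`, `def_plus`),
and `x ≤_l y` holds exactly when `x = ey` for some projection `e` (`lel_mul` and the definition of
`≤_l`). With the latter, transitivity, uniqueness and (ec5)–(ec7) follow by reassociating
products and commuting projections. The statements about `≤_r` are those about `≤_l` in the
opposite semigroupoid `E.op`. -/

universe u

namespace EhresmannSgpd

variable {S : Type u} (E : EhresmannSgpd S)

/-! ### The opposite semigroupoid -/

/-- The opposite Ehresmann semigroupoid: products are reversed, and `⁺` and `*` exchanged.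
By definition `E.op.lel` is `E.ler` and `E.op.ler` is `E.lel`. -/
def op : EhresmannSgpd S where
  defined s t := E.defined t s
  mul s t := E.mul t s
  assoc₁ s t r h₁ h₂ := by
    obtain ⟨a, b, c⟩ := E.assoc₁ r t s h₂ h₁
    exact ⟨b, a, c.symm⟩
  assoc₂ s t r h₁ h₂ := by
    obtain ⟨a, b, c⟩ := E.assoc₃ r t s h₁ h₂
    exact ⟨a, b, c.symm⟩
  assoc₃ s t r h₁ h₂ := by
    obtain ⟨a, b, c⟩ := E.assoc₂ r t s h₁ h₂
    exact ⟨a, b, c.symm⟩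
  plus := E.star
  star := E.plus
  le1 := E.re1
  le2 s t h := E.re2 t s h
  le3 s t h := by
    have := E.re2 t s h
    rw [this.2, E.re3 s t this.1, ← E.re3 s t this.1, ← this.2, E.re3 t s h]
  le4 s t h := E.re4 t s h
  re1 := E.le1
  re2 s t h := E.le2 t s h
  re3 s t h := E.le3 t s h
  re4 s t h := E.le4 t s h
  plus_star := E.star_plus
  star_plus := E.plus_star

/-! ### Projections and definedness of products -/

theorem def_plus {s t : S} : E.defined s (E.plus t) ↔ E.defined s t := by
  constructor
  · intro h
    have := (E.assoc₁ _ _ _ h (E.le1 t).1).2.1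
    rwa [(E.le1 t).2] at this
  · intro h
    refine (E.assoc₃ s (E.plus t) t (E.le1 t).1 ?_).1
    rwa [(E.le1 t).2]

theorem def_star {s t : S} : E.defined (E.star s) t ↔ E.defined s t := E.op.def_plus

theorem plus_plus (s : S) : E.plus (E.plus s) = E.plus s := by
  have := E.star_plus (E.plus s)
  rwa [E.plus_star] at this

theorem mem_iff {e : S} : e ∈ E.projections ↔ E.plus e = e := by
  constructor
  · rintro ⟨s, rfl⟩
    exact E.plus_plus s
  · intro h
    exact ⟨e, h.symm⟩

theorem star_of {e : S} (h : E.plus e = e) : E.star e = e := by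
  have := E.plus_star e
  rwa [h] at this

theorem def_self {e : S} (h : E.plus e = e) : E.defined e e := by
  have := (E.le1 e).1
  rwa [h] at this

theorem mul_self {e : S} (h : E.plus e = e) : E.mul e e = e := by
  have := (E.le1 e).2
  rwa [h] at this

theorem comm {e f : S} (he : E.plus e = e) (hf : E.plus f = f) (h : E.defined e f) :
    E.defined f e ∧ E.mul e f = E.mul f e := by
  have := E.le2 e f
  rw [he, hf] at this
  exact this h

theorem plus_mul {e t : S} (he : E.plus e = e) (h : E.defined e t) :
    E.plus (E.mul e t) = E.mul e (E.plus t) := by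
  have := E.le3 e t
  rw [he] at this
  exact (this (E.def_plus.2 h)).symm

theorem mul_proj {e f : S} (he : E.plus e = e) (hf : E.plus f = f) (h : E.defined e f) :
    E.plus (E.mul e f) = E.mul e f := by
  rw [E.plus_mul he h, hf]

/-! ### The order `≤_l` -/

theorem lel_mul {e y : S} (he : E.plus e = e) (h : E.defined e y) : E.lel (E.mul e y) y := by
  unfold lel
  rw [E.plus_mul he h]
  have := E.assoc₁ e (E.plus y) y (E.def_plus.2 h) (E.le1 y).1
  refine ⟨this.1, ?_⟩
  rw [this.2.2, (E.le1 y).2]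

theorem lel_refl (x : S) : E.lel x x := E.le1 x

theorem lel_trans {x y z : S} (h₁ : E.lel x y) (h₂ : E.lel y z) : E.lel x z := by
  obtain ⟨d₁, m₁⟩ := h₁
  obtain ⟨d₂, m₂⟩ := h₂
  have d := E.def_plus.2 d₁
  have := E.assoc₁ _ _ _ d d₂
  rw [m₂, m₁] at this
  rw [← this.2.2]
  exact E.lel_mul (E.mul_proj (E.plus_plus x) (E.plus_plus y) d) this.1

theorem lel_iff {e f : S} (he : E.plus e = e) :
    E.lel e f ↔ E.defined e f ∧ E.mul e f = e := by
  unfold lel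
  rw [he]

theorem ler_iff {e f : S} (he : E.plus e = e) (hf : E.plus f = f) :
    E.ler e f ↔ E.defined e f ∧ E.mul e f = e := by
  unfold ler
  rw [E.star_of he]
  constructor
  · rintro ⟨d, m⟩
    have := E.comm hf he d
    exact ⟨this.1, this.2 ▸ m⟩
  · rintro ⟨d, m⟩
    have := E.comm he hf d
    exact ⟨this.1, this.2 ▸ m⟩

theorem lel_cod {x y : S} (h : E.lel x y) : E.lel (E.plus x) (E.plus y) := by
  rw [E.lel_iff (E.plus_plus x)]
  refine ⟨E.def_plus.2 h.1, ?_⟩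
  rw [← E.plus_mul (E.plus_plus x) h.1, h.2]

theorem lel_antisymm {x y : S} (h₁ : E.lel x y) (h₂ : E.lel y x) : x = y := by
  have e : E.plus x = E.plus y := by
    have a := (E.lel_iff (E.plus_plus x)).1 (E.lel_cod h₁)
    have b := (E.lel_iff (E.plus_plus y)).1 (E.lel_cod h₂)
    rw [← a.2, (E.comm (E.plus_plus x) (E.plus_plus y) a.1).2, b.2]
  rw [← h₁.2, e, (E.le1 y).2]

theorem lel_dom {x y : S} (h : E.lel x y) : E.lel (E.star x) (E.star y) := by
  have px := E.star_plus x
  have a := E.assoc₁ _ _ _ h.1 (E.re1 y).1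
  rw [(E.re1 y).2, h.2] at a
  have d := E.def_star.2 a.1
  rw [E.lel_iff px]
  exact ⟨d, by rw [E.re3 x y d, a.2.2]⟩

/-! ### Compatibility with composition, restriction and corestriction -/

theorem def_comp {x y : S} (h : E.star x = E.plus y) : E.defined x y :=
  E.def_plus.1 (h ▸ (E.re1 x).1)

theorem cod_comp {x y : S} (h : E.star x = E.plus y) : E.plus (E.mul x y) = E.plus x := by
  rw [E.le4 x y (E.def_comp h), ← h, (E.re1 x).2]

theorem dom_comp {x y : S} (h : E.star x = E.plus y) : E.star (E.mul x y) = E.star y :=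
  E.op.cod_comp h.symm

theorem lel_comp {x y x' y' : S} (h : E.lel x y) (h' : E.lel x' y')
    (hx : E.star x = E.plus x') (hy : E.star y = E.plus y') :
    E.lel (E.mul x x') (E.mul y y') := by
  have a := E.assoc₁ _ _ _ h.1 (E.def_comp hy)
  have b := E.assoc₁ x (E.plus x') y' (hx ▸ (E.re1 x).1) h'.1
  rw [h'.2, ← hx, (E.re1 x).2] at b
  -- both products equal the product of `x` with the upper right factor
  unfold lel
  rw [E.cod_comp hx]
  refine ⟨a.2.1, ?_⟩
  rw [← a.2.2, h.2, b.2.2]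

theorem ec5_aux {x z : S} (h : ∃ y, E.lel x y ∧ E.ler y z) : ∃ y, E.ler x y ∧ E.lel y z := by
  obtain ⟨y, h₁, d₂, m₂⟩ := h
  obtain ⟨d₁, m₁⟩ := h₁
  -- `x = x⁺y = x⁺(zy*) = (x⁺z)y*`, so `x⁺z` is the required intermediate element
  have a := E.assoc₃ (E.plus x) z (E.star y) d₂ (m₂.symm ▸ d₁)
  rw [m₂, m₁] at a
  refine ⟨E.mul (E.plus x) z, ?_, E.lel_mul (E.plus_plus x) a.1⟩
  have hw : E.ler (E.mul (E.mul (E.plus x) z) (E.star y)) (E.mul (E.plus x) z) :=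
    E.op.lel_mul (E.star_of (E.star_plus y)) a.2.1
  rwa [a.2.2] at hw

/-- For a projection `e`, restricting to the meet `x* ∧ e` amounts to multiplying by `e`. -/
theorem mul_meet {x e : S} (h : E.defined x e) :
    E.mul x (E.mul (E.star x) e) = E.mul x e := by
  have := E.assoc₁ _ _ _ (E.re1 x).1 (E.def_star.2 h)
  rw [← this.2.2, (E.re1 x).2]

theorem ec6_aux {x y e : S} (h : E.lel x y) (hd : E.defined (E.star x) e) :
    E.lel (E.mul x (E.mul (E.star x) e)) (E.mul y (E.mul (E.star y) e)) := by
  have dx := E.def_star.1 hd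
  have a := E.assoc₂ (E.plus x) y e h.1 (h.2.symm ▸ dx)
  rw [E.mul_meet dx, E.mul_meet a.1]
  rw [h.2] at a
  rw [a.2.2]
  exact E.lel_mul (E.plus_plus x) a.2.1

theorem cod_cores {e x : S} (he : E.plus e = e) (h : E.lel e (E.plus x)) :
    E.plus (E.mul e x) = e := by
  rw [E.lel_iff he] at h
  rw [E.plus_mul he (E.def_plus.1 h.1), h.2]

theorem cores_le {e x : S} (he : E.plus e = e) (h : E.lel e (E.plus x)) :
    E.lel (E.mul e x) x :=
  E.lel_mul he (E.def_plus.1 ((E.lel_iff he).1 h).1)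

/-! ### The category `C(S)` -/

/-- The local biordered Ehresmann category `C(S)`. Composition, restriction, corestriction and
meet are all the product of `S`, which carries meaning only where each of them is defined. -/
def toCat : LBEC S where
  obj := E.projections
  dom := E.star
  cod := E.plus
  comp := E.mul
  dom_mem x := E.mem_iff.2 (E.star_plus x)
  cod_mem x := E.mem_iff.2 (E.plus_plus x)
  dom_comp _ _ h := E.dom_comp h
  cod_comp _ _ h := E.cod_comp h
  comp_assoc x y z h h' := (E.assoc₁ x y z (E.def_comp h) (E.def_comp h')).2.2
  dom_obj _ he := E.star_of (E.mem_iff.1 he)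
  cod_obj _ he := E.mem_iff.1 he
  comp_id x _ _ h := h ▸ (E.re1 x).2
  id_comp x _ _ h := h ▸ (E.le1 x).2
  lel := E.lel
  ler := E.ler
  lel_refl := E.lel_refl
  lel_antisymm _ _ h h' := E.lel_antisymm h h'
  lel_trans _ _ _ h h' := E.lel_trans h h'
  ler_refl := E.op.lel_refl
  ler_antisymm _ _ h h' := E.op.lel_antisymm h h'
  ler_trans _ _ _ h h' := E.op.lel_trans h h'
  lel_dom _ _ h := E.lel_dom h
  lel_cod _ _ h := E.lel_cod h
  ler_dom _ _ h := E.op.lel_cod h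
  ler_cod _ _ h := E.op.lel_dom h
  lel_comp _ _ _ _ h h' hx hy := E.lel_comp h h' hx hy
  ler_comp _ _ _ _ h h' hx hy := E.op.lel_comp h' h hx.symm hy.symm
  cores := E.mul
  cores_le _ _ he h := E.cores_le (E.mem_iff.1 he) h
  cod_cores _ _ he h := E.cod_cores (E.mem_iff.1 he) h
  cores_unique _ _ _ _ _ h h' := h' ▸ h.2.symm
  res := E.mul
  res_le _ _ he h := E.op.cores_le (E.star_of (E.mem_iff.1 he)) h
  dom_res _ _ he h := E.op.cod_cores (E.star_of (E.mem_iff.1 he)) h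
  res_unique _ _ _ _ _ h h' := h' ▸ h.2.symm
  mdef := E.defined
  meet := E.mul
  meet_mem _ _ he hf h := E.mem_iff.2 (E.mul_proj (E.mem_iff.1 he) (E.mem_iff.1 hf) h)
  mdef_self _ he := E.def_self (E.mem_iff.1 he)
  meet_self _ he := E.mul_self (E.mem_iff.1 he)
  mdef_comm _ _ he hf h := (E.comm (E.mem_iff.1 he) (E.mem_iff.1 hf) h).1
  meet_comm _ _ he hf h := (E.comm (E.mem_iff.1 he) (E.mem_iff.1 hf) h).2
  meet_assoc₁ _ _ _ _ _ _ h h' := E.assoc₁ _ _ _ h h'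
  meet_assoc₂ _ _ _ _ _ _ h h' := E.assoc₂ _ _ _ h h'
  meet_assoc₃ _ _ _ _ _ _ h h' := E.assoc₃ _ _ _ h h'
  ec4l _ _ he _ := E.lel_iff (E.mem_iff.1 he)
  ec4r _ _ he hf := E.ler_iff (E.mem_iff.1 he) (E.mem_iff.1 hf)
  ec5 _ _ := ⟨E.ec5_aux, E.op.ec5_aux⟩
  ec6 _ _ _ _ h hd := E.ec6_aux h hd
  ec7 _ _ _ _ h hd := E.op.ec6_aux h hd

end EhresmannSgpd

/-- For every two-sided Ehresmann semigroupoid `(S,+,*)`, the data `C(S)`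
(objects `U`, `D(s) = s*`, `R(s) = s⁺`, composition `s·t = st` when `s* = t⁺`, orders `≤_l`
and `≤_r`) is a local biordered Ehresmann category, in which the restriction of `s` to
`e ≤ D(s)` is `se` and the corestriction of `s` to `e ≤ R(s)` is `es`. -/
theorem stmt8 {S : Type u} (E : EhresmannSgpd S) :
    ∃ Cat : LBEC S, IsCofS E Cat ∧
      (∀ s e, e ∈ Cat.obj → Cat.ler e (Cat.dom s) → Cat.res s e = E.mul s e) ∧
      (∀ e s, e ∈ Cat.obj → Cat.lel e (Cat.cod s) → Cat.cores e s = E.mul e s) := by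
  exact ⟨E.toCat, ⟨rfl, rfl, rfl, fun _ _ _ => rfl, rfl, rfl,
    fun _ _ _ _ => ⟨Iff.rfl, fun _ => rfl⟩⟩, fun _ _ _ _ => rfl, fun _ _ _ _ => rfl⟩
end

section
/- The constructions S ↦ C(S) and C ↦ S(C) are mutually inverse: (a) for every two-sided Ehresmann semigroupoid (S,+,*), S(C(S)) = (S,+,*) as Ehresmann semigroupoids (same underlying set, same set of composable pairs, same product, same unary operations); (b) for every local biordered Ehresmann category (C, ≤_l, ≤_r), C(S(C)) = (C, ≤_l, ≤_r) as local biordered Ehresmann categories (same underlying set, same objects, same domain and range maps, same composition, same partial orders). -/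
/-!
Both halves reduce to computing the pseudo-product `(x|e) ∘ (e|y)`, `e = D(x) ∧ R(y)`, through
the uniqueness of restrictions and corestrictions.

* In `C(S)` the element `s e` lies `≤_r`-below `s` and has domain `e`, so it is the restriction
  `s|e`; dually `e|t = e t`. Hence `s ⊗ t = (s e)(e t) = s (s* t⁺) t = s t`. The composable pairs
  agree because `s t` is defined exactly when `s* t⁺` is: `s = s s*` and `t = t⁺ t`, and
  associativity in Exel's sense moves definedness across these factorizations.
* In a local biordered Ehresmann category, `x ⊗ y = x ∘ y` when `D(x) = R(y)`, because then
  `e = D(x)` and both restrictions are trivial. When `e` is an object, `e ⊗ y` is the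
  corestriction `(e ∧ R(y))|y`, so `R(x) ⊗ y = x` says precisely that `x` is a corestriction
  of `y`, which is `x ≤_l y`; the argument for `≤_r` is dual.
-/

universe u

/-! ### Products in an Ehresmann semigroupoid -/

namespace EhresmannSgpd

variable {S : Type u} (E : EhresmannSgpd S)

/-- Composability of `s` and `t` depends only on `s*` and `t⁺`. -/
theorem defined_star_plus_iff (s t : S) : E.defined (E.star s) (E.plus t) ↔ E.defined s t := by
  obtain ⟨hs, hs'⟩ := E.re1 s
  obtain ⟨ht, ht'⟩ := E.le1 t
  constructor
  · intro h
    have h1 := (E.assoc₁ _ _ _ h ht).2.1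
    rw [ht'] at h1
    have h2 := (E.assoc₁ _ _ _ hs h1).1
    rwa [hs'] at h2
  · intro h
    have h1 : E.defined (E.star s) t := (E.assoc₂ s (E.star s) t hs (by rwa [hs'])).1
    exact (E.assoc₃ (E.star s) (E.plus t) t ht (by rwa [ht'])).1

/-- `s t = (s e)(e t)` for `e = s* t⁺` once `e` is known to be idempotent, together with the
definedness of the products `s e` and `e t`. -/
theorem mul_eq_mul_mul (s t : S) (h : E.defined s t)
    (he : E.mul (E.mul (E.star s) (E.plus t)) (E.mul (E.star s) (E.plus t)) =
      E.mul (E.star s) (E.plus t))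
    (hed : E.defined (E.mul (E.star s) (E.plus t)) (E.mul (E.star s) (E.plus t))) :
    E.defined s (E.mul (E.star s) (E.plus t)) ∧
    E.defined (E.mul (E.star s) (E.plus t)) t ∧
    E.mul (E.mul s (E.mul (E.star s) (E.plus t))) (E.mul (E.mul (E.star s) (E.plus t)) t) =
      E.mul s t := by
  have hst := (E.defined_star_plus_iff s t).2 h
  obtain ⟨hs, hs'⟩ := E.re1 s
  obtain ⟨ht, ht'⟩ := E.le1 t
  obtain ⟨-, a2, a3⟩ := E.assoc₁ _ _ _ hs hst
  obtain ⟨b1, b2, b3⟩ := E.assoc₁ _ _ _ hst ht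
  rw [hs'] at a3
  rw [ht'] at b2 b3
  generalize E.mul (E.star s) (E.plus t) = e at *
  refine ⟨a2, b1, ?_⟩
  obtain ⟨-, c2, c3⟩ := E.assoc₁ _ _ _ hed b1
  rw [he] at c3
  rw [(E.assoc₁ _ _ _ a2 c2).2.2, ← c3, b3]
  rw [← (E.assoc₁ _ _ _ hs b2).2.2, hs']

end EhresmannSgpd

/-! ### The pseudo-product of a local biordered Ehresmann category -/

namespace LBEC

variable {C : Type u} (A : LBEC C)

theorem meet_le_left_s10 {e f : C} (he : e ∈ A.obj) (hf : f ∈ A.obj) (h : A.mdef e f) :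
    A.mdef (A.meet e f) e ∧ A.meet (A.meet e f) e = A.meet e f := by
  obtain ⟨-, h2, h3⟩ := A.meet_assoc₁ e e f he he hf (A.mdef_self e he) h
  have hm := A.meet_mem e f he hf h
  rw [A.meet_self e he] at h3
  exact ⟨A.mdef_comm _ _ he hm h2, by rw [← A.meet_comm _ _ he hm h2, ← h3]⟩

theorem meet_le_right_s10 {e f : C} (he : e ∈ A.obj) (hf : f ∈ A.obj) (h : A.mdef e f) :
    A.mdef (A.meet e f) f ∧ A.meet (A.meet e f) f = A.meet e f := by
  obtain ⟨h1, -, h3⟩ := A.meet_assoc₁ e f f he hf hf h (A.mdef_self f hf)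
  rw [A.meet_self f hf] at h3
  exact ⟨h1, h3⟩

theorem res_dom (x : C) : A.res x (A.dom x) = x :=
  (A.res_unique x _ x (A.dom_mem x) (A.ler_refl _) (A.ler_refl _) rfl).symm

theorem cores_cod (x : C) : A.cores (A.cod x) x = x :=
  (A.cores_unique _ x x (A.cod_mem x) (A.lel_refl _) (A.lel_refl _) rfl).symm

theorem pprod_eq_comp {x y : C} (h : A.dom x = A.cod y) : A.pprod x y = A.comp x y := by
  unfold LBEC.pprod
  rw [← h, A.meet_self _ (A.dom_mem x), A.res_dom, h, A.cores_cod]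

/-- Multiplying by an object on the left is corestriction. -/
theorem pprod_obj_left {e y : C} (he : e ∈ A.obj) (h : A.mdef e (A.cod y)) :
    A.pprod e y = A.cores (A.meet e (A.cod y)) y := by
  have hy := A.cod_mem y
  have hm := A.meet_mem e _ he hy h
  have hl := (A.ec4r _ _ hm he).2 (A.meet_le_left_s10 he hy h)
  have hr := (A.ec4l _ _ hm hy).2 (A.meet_le_right_s10 he hy h)
  unfold LBEC.pprod
  rw [A.dom_obj e he]
  rw [← A.res_unique e _ _ hm (by rwa [A.dom_obj e he]) hl (A.dom_obj _ hm)]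
  exact A.id_comp _ _ hm (A.cod_cores _ _ hm hr)

/-- Multiplying by an object on the right is restriction. -/
theorem pprod_obj_right {x e : C} (he : e ∈ A.obj) (h : A.mdef (A.dom x) e) :
    A.pprod x e = A.res x (A.meet (A.dom x) e) := by
  have hx := A.dom_mem x
  have hm := A.meet_mem _ e hx he h
  have hl := (A.ec4r _ _ hm hx).2 (A.meet_le_left_s10 hx he h)
  have hr := (A.ec4l _ _ hm he).2 (A.meet_le_right_s10 hx he h)
  unfold LBEC.pprod
  rw [A.cod_obj e he]
  rw [← A.cores_unique _ e _ hm (by rwa [A.cod_obj e he]) hr (A.cod_obj _ hm)]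
  exact A.comp_id _ _ hm (A.dom_res _ _ hm hl)

/-- `x ≤_l y` holds exactly when `x = R(x) ⊗ y`: both sides say that `x` is the corestriction
of `y` to `R(x)`. -/
theorem lel_iff (x y : C) :
    A.lel x y ↔ A.pdef (A.cod x) y ∧ A.pprod (A.cod x) y = x := by
  have hx := A.cod_mem x
  have hy := A.cod_mem y
  unfold LBEC.pdef
  rw [A.dom_obj _ hx]
  constructor
  · intro h
    have hc := A.lel_cod _ _ h
    obtain ⟨h1, h2⟩ := (A.ec4l _ _ hx hy).1 hc
    refine ⟨h1, ?_⟩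
    rw [A.pprod_obj_left hx h1, h2]
    exact (A.cores_unique _ _ _ hx hc h rfl).symm
  · rintro ⟨h1, h2⟩
    rw [A.pprod_obj_left hx h1] at h2
    have hm := A.meet_mem _ _ hx hy h1
    have := A.cores_le _ y hm ((A.ec4l _ _ hm hy).2 (A.meet_le_right_s10 hx hy h1))
    rwa [h2] at this

/-- `x ≤_r y` holds exactly when `x = y ⊗ D(x)`: both sides say that `x` is the restriction
of `y` to `D(x)`. -/
theorem ler_iff (x y : C) :
    A.ler x y ↔ A.pdef y (A.dom x) ∧ A.pprod y (A.dom x) = x := by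
  have hx := A.dom_mem x
  have hy := A.dom_mem y
  unfold LBEC.pdef
  rw [A.cod_obj _ hx]
  constructor
  · intro h
    have hc := A.ler_dom _ _ h
    obtain ⟨h1, h2⟩ := (A.ec4r _ _ hx hy).1 hc
    have h1' := A.mdef_comm _ _ hx hy h1
    refine ⟨h1', ?_⟩
    rw [A.pprod_obj_right hx h1', A.meet_comm _ _ hy hx h1', h2]
    exact (A.res_unique _ _ _ hx hc h rfl).symm
  · rintro ⟨h1, h2⟩
    rw [A.pprod_obj_right hx h1] at h2
    have hm := A.meet_mem _ _ hy hx h1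
    have := A.res_le y _ hm ((A.ec4r _ _ hm hy).2 (A.meet_le_left_s10 hy hx h1))
    rwa [h2] at this

end LBEC

/-! ### Comparison of the two constructions -/

/-- In `C(S)` the pseudo-product is the product of `S`: with `e = s* t⁺`, uniqueness identifies
`s e` as the restriction `s|e` and `e t` as the corestriction `e|t`. -/
theorem IsCofS.pprod_eq {S : Type u} {E : EhresmannSgpd S} {A : LBEC S} (hA : IsCofS E A)
    {s t : S} (h : E.defined s t) : A.pprod s t = E.mul s t := by
  obtain ⟨hobj, hdom, hcod, hcomp, hlel, hler, hmeet⟩ := hA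
  have hs : A.dom s ∈ A.obj := A.dom_mem s
  have ht : A.cod t ∈ A.obj := A.cod_mem t
  have hst := (E.defined_star_plus_iff s t).2 h
  have hM := hmeet (A.dom s) (A.cod t) (hobj ▸ hs) (hobj ▸ ht)
  rw [hdom, hcod] at hM
  have hmd : A.mdef (A.dom s) (A.cod t) := by rw [hdom, hcod]; exact hM.1.2 hst
  have hm := A.meet_mem _ _ hs ht hmd
  have hr := (A.ec4r _ _ hm hs).2 (A.meet_le_left_s10 hs ht hmd)
  have hl := (A.ec4l _ _ hm ht).2 (A.meet_le_right_s10 hs ht hmd)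
  have hstar := A.dom_obj _ hm
  have hplus := A.cod_obj _ hm
  have hmm := hmeet _ _ (hobj ▸ hm) (hobj ▸ hm)
  have hed := hmm.1.1 (A.mdef_self _ hm)
  have hee := hmm.2 hed
  rw [A.meet_self _ hm] at hee
  have heq : A.meet (A.dom s) (A.cod t) = E.mul (E.star s) (E.plus t) := by
    rw [hdom, hcod]; exact hM.2 hst
  obtain ⟨p1, p2, p3⟩ := E.mul_eq_mul_mul s t h
    (by rw [← heq]; exact hee.symm) (by rw [← heq]; exact hed)
  unfold LBEC.pprod
  have hrs := A.res_unique s _ (E.mul s (A.meet (A.dom s) (A.cod t))) hm hr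
  have hct := A.cores_unique _ t (E.mul (A.meet (A.dom s) (A.cod t)) t) hm hl
  have hse := (A.ec4r _ _ hm hs).1 hr
  have het := (A.ec4l _ _ hm ht).1 hl
  have hsm := hmeet _ _ (hobj ▸ hs) (hobj ▸ hm)
  have htm := hmeet _ _ (hobj ▸ hm) (hobj ▸ ht)
  have e1 : E.mul (A.dom s) (A.meet (A.dom s) (A.cod t)) = A.meet (A.dom s) (A.cod t) := by
    have hd := A.mdef_comm _ _ hm hs hse.1
    rw [← hsm.2 (hsm.1.1 hd), A.meet_comm _ _ hs hm hd, hse.2]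
  have e2 : E.mul (A.meet (A.dom s) (A.cod t)) (A.cod t) = A.meet (A.dom s) (A.cod t) := by
    rw [← htm.2 (htm.1.1 het.1), het.2]
  rw [← heq] at p1 p2 p3
  generalize A.meet (A.dom s) (A.cod t) = e at *
  rw [hdom] at hstar hrs e1
  rw [hcod] at hplus hct e2
  rw [hler] at hrs
  rw [hlel] at hct
  have q1 : E.star (E.mul s e) = e := by rw [E.re4 _ _ p1, e1, hstar]
  have q2 : E.plus (E.mul e t) = e := by rw [E.le4 _ _ p2, e2, hplus]
  rw [← hrs ⟨by rw [q1]; exact p1, by rw [q1]⟩ q1, ← hct ⟨by rw [q2]; exact p2, by rw [q2]⟩ q2,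
    hcomp _ _ (q1.trans q2.symm), p3]

/-- The constructions `S ↦ C(S)` and `C ↦ S(C)` are mutually inverse:
(a) `S(C(S)) = S` as Ehresmann semigroupoids (same composable pairs, same product, same
unary operations); (b) `C(S(C)) = C` as local biordered Ehresmann categories (same objects,
same domain and range maps, same composition, same partial orders). -/
theorem stmt10 :
    (∀ (S : Type u) (E : EhresmannSgpd S) (Cat : LBEC S) (E' : EhresmannSgpd S),
      IsCofS E Cat → IsSofC Cat E' →
        E'.defined = E.defined ∧
        (∀ s t, E.defined s t → E'.mul s t = E.mul s t) ∧
        E'.plus = E.plus ∧ E'.star = E.star) ∧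
    (∀ (C : Type u) (Cat : LBEC C) (E : EhresmannSgpd C) (Cat' : LBEC C),
      IsSofC Cat E → IsCofS E Cat' →
        Cat'.obj = Cat.obj ∧ Cat'.dom = Cat.dom ∧ Cat'.cod = Cat.cod ∧
        (∀ x y, Cat.dom x = Cat.cod y → Cat'.comp x y = Cat.comp x y) ∧
        Cat'.lel = Cat.lel ∧ Cat'.ler = Cat.ler) := by
  constructor
  · rintro S E A E' hA ⟨hdef, hmul, hplus, hstar⟩
    have hD : E'.defined = E.defined := by
      funext s t
      apply propext
      rw [hdef, ← E.defined_star_plus_iff]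
      obtain ⟨hobj, hdom, hcod, -, -, -, hmeet⟩ := hA
      rw [← hdom, ← hcod]
      exact (hmeet (A.dom s) (A.cod t) (hobj ▸ A.dom_mem s) (hobj ▸ A.cod_mem t)).1
    refine ⟨hD, ?_, hplus.trans hA.2.2.1, hstar.trans hA.2.1⟩
    intro s t h
    rw [hmul s t (by rwa [hD]), hA.pprod_eq h]
  · rintro C A E A' ⟨hdef, hmul, hplus, hstar⟩ ⟨hobj, hdom, hcod, hcomp, hlel, hler, -⟩
    refine ⟨?_, hdom.trans hstar, hcod.trans hplus, ?_, ?_, ?_⟩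
    · rw [hobj]
      ext e
      constructor
      · rintro ⟨s, rfl⟩
        rw [hplus]
        exact A.cod_mem s
      · intro he
        exact ⟨e, by rw [hplus, A.cod_obj e he]⟩
    · intro x y h
      have hd : E.defined x y := by
        rw [hdef]
        unfold LBEC.pdef
        rw [← h]
        exact A.mdef_self _ (A.dom_mem x)
      rw [hcomp x y (by rw [hstar, hplus, h]), hmul x y hd, A.pprod_eq_comp h]
    · funext x y
      apply propext
      rw [hlel, A.lel_iff]
      unfold EhresmannSgpd.lel
      rw [hplus, ← hdef]
      exact and_congr_right fun h => by rw [hmul _ _ h]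
    · funext x y
      apply propext
      rw [hler, A.ler_iff]
      unfold EhresmannSgpd.ler
      rw [hstar, ← hdef]
      exact and_congr_right fun h => by rw [hmul _ _ h]
end
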